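/- Let G ≅ C_m ⋉_φ C_{mn} and suppose e(G) = mn, where e(G) = max{ord(g) : g ∈ G}. Then η(G) ≤ 2m + mn − 2 and s(G) ≤ 2m + 2mn − 3. -/

import Mathlib

/-- A sequence (multiset) over `G` is product-one if its terms can be ordered so
that their product equals `1`. -/
def IsProductOne {G : Type*} [Group G] (S : Multiset G) : Prop :=
  ∃ l : List G, (l : Multiset G) = S ∧ l.prod = 1

/-!
Let `x` and `y` generate `C_{mn}` and `C_m`, with `y x y⁻¹ = x ^ u`, and let `p` be the least prime
factor of `m`. Since `u ^ m ≡ 1 [MOD m]` and `m` is coprime to `p - 1`, we have `u ≡ 1 [MOD p]`, so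
the exponents of `x` and `y` in a product add up mod `p` as in `C_p × C_p`. By Kemnitz' theorem for
`C_p × C_p`, every `4 p - 3` elements include `p` whose product is some `x ^ (p i) * y ^ (p j)`.
Cutting a long sequence into such blocks of length `p` replaces `x`, `y`, `m` by `x ^ p`, `y ^ p`,
`m / p`; once `m = 1` only the theorem of Erdős, Ginzburg and Ziv is needed. This bounds `s(G)`, and
the bound on `η(G)` follows by padding a sequence with `e(G) - 1` copies of `1`.

Kemnitz' theorem is proved by Reiher's method: the numbers of zero-sum subsequences of given lengths
satisfy linear congruences mod `p` (obtained here from the vanishing of alternating sums of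
polynomials of low degree over a cube), and these are inconsistent if there is none of length `p`.
-/

open Finset

section AlternatingSum

variable {ι κ R : Type*}

theorem totalDegree_aeval_le [CommSemiring R] (q : Polynomial R) (L : MvPolynomial ι R) :
    (Polynomial.aeval L q).totalDegree ≤ q.natDegree * L.totalDegree := by
  rw [Polynomial.aeval_eq_sum_range]
  refine MvPolynomial.totalDegree_finsetSum_le fun i hi => ?_
  calc (q.coeff i • L ^ i).totalDegree
      ≤ (L ^ i).totalDegree := MvPolynomial.totalDegree_smul_le _ _
    _ ≤ i * L.totalDegree := MvPolynomial.totalDegree_pow _ _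
    _ ≤ q.natDegree * L.totalDegree := Nat.mul_le_mul_right _ (mem_range_succ_iff.1 hi)

variable [CommRing R]

-- A monomial of low degree misses a variable `j`, so toggling `j` cancels its terms in pairs.
theorem sum_powerset_neg_one_pow_card_mul_eval [DecidableEq ι] {J : Finset ι}
    {P : MvPolynomial ι R} (hP : P.totalDegree < #J) :
    ∑ T ∈ J.powerset, (-1 : R) ^ #T * P.eval (fun i => if i ∈ T then 1 else 0) = 0 := by
  simp_rw [MvPolynomial.eval_eq, mul_sum]
  rw [sum_comm]
  refine sum_eq_zero fun d hd => ?_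
  have card_support_lt : #d.support < #J := by
    refine lt_of_le_of_lt (le_trans ?_ (MvPolynomial.le_totalDegree hd)) hP
    simpa [Finsupp.sum] using card_nsmul_le_sum d.support d 1
      fun i hi => Nat.one_le_iff_ne_zero.2 (Finsupp.mem_support_iff.1 hi)
  obtain ⟨j, hjJ, hjd⟩ := exists_mem_notMem_of_card_lt_card card_support_lt
  rw [← insert_erase hjJ, sum_powerset_insert (notMem_erase j J), ← sum_add_distrib]
  refine sum_eq_zero fun T hT => ?_
  have hjT : j ∉ T := fun h => notMem_erase j J (mem_powerset.1 hT h)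
  have prod_insert_eq : ∏ i ∈ d.support, (if i ∈ insert j T then (1 : R) else 0) ^ d i =
      ∏ i ∈ d.support, (if i ∈ T then (1 : R) else 0) ^ d i :=
    prod_congr rfl fun i hi => by
      simp only [mem_insert, ne_of_mem_of_not_mem hi hjd, false_or]
  rw [card_insert_of_notMem hjT, prod_insert_eq]
  ring

theorem sum_powerset_neg_one_pow_card_mul_prod_eval_sum {J : Finset ι} {s : Finset κ}
    (a : κ → ι → R) {Q : κ → Polynomial R} (hQ : ∑ k ∈ s, (Q k).natDegree < #J) :
    ∑ T ∈ J.powerset, (-1 : R) ^ #T * ∏ k ∈ s, (Q k).eval (∑ i ∈ T, a k i) = 0 := by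
  classical
  let L (k : κ) : MvPolynomial ι R := ∑ i ∈ J, MvPolynomial.C (a k i) * MvPolynomial.X i
  have totalDegree_L (k : κ) : (L k).totalDegree ≤ 1 :=
    MvPolynomial.totalDegree_finsetSum_le fun i _ => by
      rw [MvPolynomial.C_mul_X_eq_monomial]
      exact (MvPolynomial.totalDegree_monomial_le _ _).trans (by simp)
  have eval_L {T : Finset ι} (hT : T ⊆ J) (k : κ) :
      (L k).eval (fun i => if i ∈ T then 1 else 0) = ∑ i ∈ T, a k i := by
    simp [L, sum_ite_mem, inter_eq_right.2 hT]
  have totalDegree_prod : (∏ k ∈ s, Polynomial.aeval (L k) (Q k)).totalDegree < #J := by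
    refine lt_of_le_of_lt ((MvPolynomial.totalDegree_finsetProd _ _).trans ?_) hQ
    refine sum_le_sum fun k _ => (totalDegree_aeval_le _ _).trans ?_
    simpa only [mul_one] using Nat.mul_le_mul_left (Q k).natDegree (totalDegree_L k)
  rw [← sum_powerset_neg_one_pow_card_mul_eval totalDegree_prod]
  refine sum_congr rfl fun T hT => ?_
  rw [map_prod]
  congr! 2 with k
  rw [← eval_L (mem_powerset.1 hT), ← MvPolynomial.coe_aeval_eq_eval, RingHom.coe_coe,
    ← Polynomial.aeval_algHom_apply, ← Polynomial.coe_aeval_eq_eval]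

end AlternatingSum

section ZeroSumCount

variable {ι M : Type*} [AddCommMonoid M] [DecidableEq M]

/-- The number of zero-sum subsequences of length `k` of the sequence `f` restricted to `J`,
subsequences being index sets. Kemnitz' theorem is proved by computing these numbers mod `p`. -/
def zeroSumCount (f : ι → M) (J : Finset ι) (k : ℕ) : ℕ :=
  #{T ∈ J.powersetCard k | ∑ i ∈ T, f i = 0}

theorem zeroSumCount_zero (f : ι → M) (J : Finset ι) : zeroSumCount f J 0 = 1 := by
  simp [zeroSumCount, filter_singleton]

theorem zeroSumCount_eq_zero_of_card_lt (f : ι → M) {J : Finset ι} {k : ℕ} (h : #J < k) :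
    zeroSumCount f J k = 0 := by
  simp [zeroSumCount, powersetCard_eq_empty.2 h]

theorem zeroSumCount_eq_zero_iff {f : ι → M} {J : Finset ι} {k : ℕ} :
    zeroSumCount f J k = 0 ↔ ∀ T ⊆ J, #T = k → ∑ i ∈ T, f i ≠ 0 := by
  simp [zeroSumCount, filter_eq_empty_iff, mem_powersetCard, and_imp]

theorem zeroSumCount_eq_zero_of_subset {f : ι → M} {I J : Finset ι} {k : ℕ} (hIJ : I ⊆ J)
    (h : zeroSumCount f J k = 0) : zeroSumCount f I k = 0 :=
  zeroSumCount_eq_zero_iff.2 fun T hT => zeroSumCount_eq_zero_iff.1 h T (hT.trans hIJ)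

theorem sum_powersetCard_zeroSumCount (f : ι → M) (X : Finset ι) {s k : ℕ} (hks : k ≤ s) :
    ∑ J ∈ X.powersetCard s, zeroSumCount f J k =
      (#X - k).choose (s - k) * zeroSumCount f X k := by
  classical
  set Z : Finset (Finset ι) := {T ∈ X.powersetCard k | ∑ i ∈ T, f i = 0} with hZ
  have card_supersets (T : Finset ι) (hT : T ∈ Z) :
      #{J ∈ X.powersetCard s | T ⊆ J} = (#X - k).choose (s - k) := by
    obtain ⟨hTX, hTk⟩ := mem_powersetCard.1 (mem_filter.1 hT).1
    rw [card_filter_powersetCard_subset _ _ _ hTX (hTk.trans_le hks), hTk]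
  have zeroSumCount_eq (J : Finset ι) (hJ : J ∈ X.powersetCard s) :
      zeroSumCount f J k = #{T ∈ Z | T ⊆ J} := by
    have hJX := (mem_powersetCard.1 hJ).1
    refine congrArg card (Finset.ext fun T => ?_)
    simp only [hZ, mem_filter, mem_powersetCard]
    exact ⟨fun h => ⟨⟨⟨h.1.1.trans hJX, h.1.2⟩, h.2⟩, h.1.1⟩,
      fun h => ⟨⟨h.2, h.1.1.2⟩, h.1.2⟩⟩
  calc ∑ J ∈ X.powersetCard s, zeroSumCount f J k
      = ∑ J ∈ X.powersetCard s, #{T ∈ Z | T ⊆ J} := sum_congr rfl zeroSumCount_eq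
    _ = ∑ T ∈ Z, #{J ∈ X.powersetCard s | T ⊆ J} := by
        simp only [card_filter]
        exact sum_comm
    _ = (#X - k).choose (s - k) * zeroSumCount f X k := by
        rw [sum_congr rfl card_supersets, sum_const, smul_eq_mul, mul_comm, zeroSumCount]

end ZeroSumCount

section ZeroSumCountGroup

variable {ι M : Type*} [AddCommGroup M] [DecidableEq M]

theorem zeroSumCount_card_sub_eq_zero {f : ι → M} {J : Finset ι} {k : ℕ}
    (hJ : ∑ i ∈ J, f i = 0) (hk : k ≤ #J) (h : zeroSumCount f J k = 0) :
    zeroSumCount f J (#J - k) = 0 := by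
  classical
  refine zeroSumCount_eq_zero_iff.2 fun T hTJ hT hT0 => ?_
  refine zeroSumCount_eq_zero_iff.1 h (J \ T) sdiff_subset ?_ ?_
  · rw [card_sdiff_of_subset hTJ]; omega
  · rwa [← sum_sdiff hTJ, hT0, add_zero] at hJ

-- Both sides count the pairs of disjoint zero-sum subsets of sizes `a` and `b`.
theorem sum_zeroSumCount_sdiff [DecidableEq ι] (f : ι → M) (X : Finset ι) (a b : ℕ) :
    ∑ A ∈ X.powersetCard a with ∑ i ∈ A, f i = 0, zeroSumCount f (X \ A) b =
      ∑ D ∈ X.powersetCard (a + b) with ∑ i ∈ D, f i = 0, zeroSumCount f D b := by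
  simp only [zeroSumCount, ← card_sigma]
  refine card_bij' (fun x _ => ⟨x.1 ∪ x.2, x.2⟩) (fun x _ => ⟨x.1 \ x.2, x.2⟩) ?_ ?_ ?_ ?_
  · rintro ⟨A, B⟩ h
    simp only [mem_sigma, mem_filter, mem_powersetCard, subset_sdiff] at h ⊢
    obtain ⟨⟨⟨hAX, hA⟩, hA0⟩, ⟨⟨hBX, hBA⟩, hB⟩, hB0⟩ := h
    refine ⟨⟨⟨union_subset hAX hBX, ?_⟩, ?_⟩, ⟨subset_union_right, hB⟩, hB0⟩
    · rw [card_union_of_disjoint hBA.symm, hA, hB]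
    · rw [sum_union hBA.symm, hA0, hB0, add_zero]
  · rintro ⟨D, B⟩ h
    simp only [mem_sigma, mem_filter, mem_powersetCard, subset_sdiff] at h ⊢
    obtain ⟨⟨⟨hDX, hD⟩, hD0⟩, ⟨hBD, hB⟩, hB0⟩ := h
    refine ⟨⟨⟨sdiff_subset.trans hDX, ?_⟩, ?_⟩, ⟨⟨hBD.trans hDX, disjoint_sdiff⟩, hB⟩, hB0⟩
    · rw [card_sdiff_of_subset hBD]; omega
    · rwa [← sum_sdiff hBD, hB0, add_zero] at hD0
  · rintro ⟨A, B⟩ h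
    simp only [mem_sigma, mem_filter, mem_powersetCard, subset_sdiff] at h
    simp only [union_sdiff_cancel_right h.2.1.1.2.symm]
  · rintro ⟨D, B⟩ h
    simp only [mem_sigma, mem_filter, mem_powersetCard] at h
    simp only [sdiff_union_of_subset h.2.1.1]

end ZeroSumCountGroup

section SignedZeroSumCount

variable {ι κ M : Type*} {p : ℕ}

/-- The number of zero-sum subsequences of `f` restricted to `J` whose length is `r` mod `p`,
counted mod `p` with the sign of the parity of their length. -/
def signedZeroSumCount [AddCommMonoid M] [DecidableEq M] (f : ι → M) (J : Finset ι) (r : ZMod p) :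
    ZMod p :=
  ∑ T ∈ J.powerset with ∑ i ∈ T, f i = 0, if (#T : ZMod p) = r then (-1) ^ #T else 0

theorem sum_range_mul_ite_natCast_eq {N r : ℕ} (hr : r < p) (F : ℕ → ZMod p) :
    ∑ k ∈ range (N * p), (if (k : ZMod p) = r then F k else 0) =
      ∑ q ∈ range N, F (q * p + r) := by
  induction N with
  | zero => simp
  | succ N ih =>
    rw [add_one_mul, sum_range_add, ih, sum_range_succ]
    congr 1
    rw [sum_eq_single_of_mem r (mem_range.2 hr)]
    · simp
    · intro k hk hkr
      refine if_neg fun h => hkr (Nat.ModEq.eq_of_lt_of_lt ?_ (mem_range.1 hk) hr)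
      exact (ZMod.natCast_eq_natCast_iff k r p).1 (by simpa using h)

theorem neg_one_pow_mul_prime_add [Fact p.Prime] (q r : ℕ) :
    (-1 : ZMod p) ^ (q * p + r) = (-1) ^ r * (-1) ^ q := by
  rw [pow_add, pow_mul', neg_one_pow_char, mul_comm]

theorem signedZeroSumCount_natCast [Fact p.Prime] [AddCommMonoid M] [DecidableEq M] (f : ι → M)
    {J : Finset ι} {N r : ℕ} (hJ : #J < N * p) (hr : r < p) :
    signedZeroSumCount f J (r : ZMod p) =
      (-1) ^ r * ∑ q ∈ range N, (-1) ^ q * (zeroSumCount f J (q * p + r) : ZMod p) := by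
  have card_lt (T : Finset ι) (hT : T ∈ J.powerset) : #T < N * p :=
    (card_le_card (mem_powerset.1 hT)).trans_lt hJ
  calc signedZeroSumCount f J (r : ZMod p)
      = ∑ k ∈ range (N * p),
          if (k : ZMod p) = r then (-1) ^ k * (zeroSumCount f J k : ZMod p) else 0 := by
        rw [signedZeroSumCount, ← sum_fiberwise_of_maps_to (g := card)
          fun T hT => mem_range.2 (card_lt T (mem_filter.1 hT).1)]
        refine sum_congr rfl fun k _ => ?_
        rw [zeroSumCount, powersetCard_eq_filter, filter_comm, filter_filter,
          sum_congr rfl fun T hT => by rw [(mem_filter.1 hT).2.1]]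
        simp [mul_comm]
    _ = ∑ q ∈ range N, (-1) ^ (q * p + r) * (zeroSumCount f J (q * p + r) : ZMod p) :=
        sum_range_mul_ite_natCast_eq hr _
    _ = _ := by
        simp only [neg_one_pow_mul_prime_add, mul_sum, mul_assoc]

variable [Fact p.Prime]

theorem one_sub_pow_card_sub_one (x : ZMod p) : 1 - x ^ (p - 1) = if x = 0 then 1 else 0 := by
  rw [ZMod.pow_card_sub_one]
  split_ifs <;> simp_all

theorem signedZeroSumCount_eq_sum_eval [AddCommMonoid M] [DecidableEq M] (f : ι → M)
    (J : Finset ι) (r : ZMod p) :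
    signedZeroSumCount f J r = ∑ T ∈ J.powerset with ∑ i ∈ T, f i = 0,
      (-1) ^ #T * (1 - (Polynomial.X - Polynomial.C r) ^ (p - 1)).eval (#T : ZMod p) := by
  simp [signedZeroSumCount, one_sub_pow_card_sub_one, sub_eq_zero]

variable [Fintype κ]

-- `∏ k, (1 - X k ^ (p - 1))` is the indicator of `0` on `(ℤ/p)^κ`.
theorem sum_zeroSum_neg_one_pow_card_mul_eval (f : ι → κ → ZMod p) {J : Finset ι}
    {Q : Polynomial (ZMod p)} (hQ : Fintype.card κ * (p - 1) + Q.natDegree < #J) :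
    ∑ T ∈ J.powerset with ∑ i ∈ T, f i = 0, (-1) ^ #T * Q.eval (#T : ZMod p) = 0 := by
  let a : Option κ → ι → ZMod p := fun k i => k.elim 1 (f i)
  let P : Option κ → Polynomial (ZMod p) := fun k => k.elim Q fun _ => 1 - Polynomial.X ^ (p - 1)
  have natDegree_indicator : (1 - Polynomial.X ^ (p - 1) : Polynomial (ZMod p)).natDegree ≤ p - 1 :=
    (Polynomial.natDegree_sub_le _ _).trans (by simp)
  have sum_natDegree_lt : ∑ k, (P k).natDegree < #J := by
    refine lt_of_le_of_lt ?_ hQ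
    rw [Fintype.sum_option, add_comm]
    exact Nat.add_le_add_right (sum_le_card_nsmul _ _ _ fun _ _ => natDegree_indicator) _
  rw [← sum_powerset_neg_one_pow_card_mul_prod_eval_sum a sum_natDegree_lt, sum_filter]
  refine sum_congr rfl fun T _ => ?_
  have prod_indicator : ∏ k, (P (some k)).eval (∑ i ∈ T, a (some k) i) =
      if ∑ i ∈ T, f i = 0 then 1 else 0 := by
    simp [P, a, one_sub_pow_card_sub_one, prod_ite_zero, funext_iff]
  rw [Fintype.prod_option, prod_indicator]
  simp [P, a]

theorem signedZeroSumCount_eq_zero (f : ι → κ → ZMod p) {J : Finset ι}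
    (hJ : (Fintype.card κ + 1) * (p - 1) < #J) (r : ZMod p) : signedZeroSumCount f J r = 0 := by
  have natDegree_le :
      (1 - (Polynomial.X - Polynomial.C r) ^ (p - 1)).natDegree ≤ p - 1 :=
    (Polynomial.natDegree_sub_le _ _).trans (by simp)
  rw [add_one_mul] at hJ
  rw [signedZeroSumCount_eq_sum_eval, sum_zeroSum_neg_one_pow_card_mul_eval f (by omega)]

-- The degree drops by one because the leading terms of the two indicators cancel.
theorem signedZeroSumCount_eq (f : ι → κ → ZMod p) {J : Finset ι}
    (hJ : (Fintype.card κ + 1) * (p - 1) ≤ #J) (r s : ZMod p) :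
    signedZeroSumCount f J r = signedZeroSumCount f J s := by
  have hp : p - 1 ≠ 0 := Nat.sub_ne_zero_of_lt (Fact.out : p.Prime).one_lt
  have isMonicOfDegree_pow (t : ZMod p) :
      ((Polynomial.X - Polynomial.C t) ^ (p - 1)).IsMonicOfDegree (p - 1) := by
    simpa only [one_mul] using (Polynomial.isMonicOfDegree_X_sub_one t).pow (p - 1)
  have natDegree_lt := (isMonicOfDegree_pow s).natDegree_sub_lt hp (isMonicOfDegree_pow r)
  rw [add_one_mul] at hJ
  rw [← sub_eq_zero, ← sum_zeroSum_neg_one_pow_card_mul_eval f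
      ((Nat.add_lt_add_left natDegree_lt _).trans_le hJ),
    signedZeroSumCount_eq_sum_eval, signedZeroSumCount_eq_sum_eval, ← sum_sub_distrib]
  refine sum_congr rfl fun T _ => ?_
  simp only [Polynomial.eval_sub, Polynomial.eval_one]
  ring

end SignedZeroSumCount

section Kemnitz

variable {ι κ : Type*} {p : ℕ} [Fact p.Prime]

theorem sum_range_neg_one_pow_mul_zeroSumCount [Fintype κ] (f : ι → κ → ZMod p) {J : Finset ι}
    {N r : ℕ} (hJ : (Fintype.card κ + 1) * (p - 1) < #J) (hJN : #J < N * p) (hr : r < p) :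
    ∑ q ∈ range N, (-1) ^ q * (zeroSumCount f J (q * p + r) : ZMod p) = 0 := by
  have h := signedZeroSumCount_eq_zero f hJ r
  rw [signedZeroSumCount_natCast f hJN hr] at h
  exact (mul_eq_zero.1 h).resolve_left (pow_ne_zero _ (neg_ne_zero.2 one_ne_zero))

theorem natCast_choose_prime (n : ℕ) : (n.choose p : ZMod p) = (n / p : ℕ) := by
  have h := Choose.choose_modEq_choose_mod_mul_choose_div_nat (n := n) (k := p) (p := p)
  rw [Nat.mod_self, Nat.div_self (Fact.out : p.Prime).pos, Nat.choose_zero_right,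
    Nat.choose_one_right, one_mul] at h
  exact (ZMod.natCast_eq_natCast_iff _ _ _).2 h

variable (f : ι → Fin 2 → ZMod p)

theorem zeroSumCount_relation_of_card_eq_three_mul_sub {J : Finset ι} (hJ : #J = 3 * p - 3) :
    (1 : ZMod p) - zeroSumCount f J p + zeroSumCount f J (2 * p) =
      zeroSumCount f J (p - 1) - zeroSumCount f J (2 * p - 1) := by
  have hp := (Fact.out : p.Prime).two_le
  have h := signedZeroSumCount_eq f (J := J) (by rw [Fintype.card_fin]; omega)
    ((0 : ℕ) : ZMod p) ((p - 1 : ℕ) : ZMod p)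
  rw [signedZeroSumCount_natCast f (N := 3) (by omega) (by omega),
    signedZeroSumCount_natCast f (N := 3) (by omega) (by omega),
    ZMod.pow_card_sub_one_eq_one (neg_ne_zero.2 one_ne_zero)] at h
  simp only [sum_range_succ, sum_range_zero, ← Nat.add_sub_assoc (one_le_two.trans hp)] at h
  rw [zeroSumCount_eq_zero_of_card_lt f (k := 2 * p + p - 1) (by omega)] at h
  simp only [zero_mul, one_mul, add_zero, zero_add, zeroSumCount_zero] at h
  rw [show p + p - 1 = 2 * p - 1 by omega] at h
  push_cast at h
  linear_combination h

theorem zeroSumCount_relation_of_card_eq_four_mul_sub (hp : 2 < p) {X : Finset ι}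
    (hX : #X = 4 * p - 3) :
    (3 : ZMod p) - 2 * zeroSumCount f X p + zeroSumCount f X (2 * p) =
      2 * zeroSumCount f X (p - 1) - zeroSumCount f X (2 * p - 1) := by
  have sum_count {k q : ℕ} (hk : k ≤ 3 * p - 3) (hq : q * p ≤ 4 * p - 3 - k)
      (hq' : 4 * p - 3 - k < (q + 1) * p) :
      ∑ J ∈ X.powersetCard (3 * p - 3), (zeroSumCount f J k : ZMod p) =
        q * zeroSumCount f X k := by
    rw [← Nat.cast_sum, sum_powersetCard_zeroSumCount f X hk, hX,
      ← Nat.choose_symm_of_eq_add (show 4 * p - 3 - k = p + (3 * p - 3 - k) by omega),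
      Nat.cast_mul, natCast_choose_prime, Nat.div_eq_of_lt_le hq hq']
  have h := sum_congr rfl fun _ (hJ : _ ∈ X.powersetCard (3 * p - 3)) =>
    zeroSumCount_relation_of_card_eq_three_mul_sub f (mem_powersetCard.1 hJ).2
  have sum_one : ∑ _ ∈ X.powersetCard (3 * p - 3), (1 : ZMod p) = 3 := by
    simpa [zeroSumCount_zero] using sum_count (k := 0) (q := 3) (by omega) (by omega) (by omega)
  rw [sum_add_distrib, sum_sub_distrib, sum_sub_distrib, sum_one,
    sum_count (k := p) (q := 2) (by omega) (by omega) (by omega),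
    sum_count (k := 2 * p) (q := 1) (by omega) (by omega) (by omega),
    sum_count (k := p - 1) (q := 2) (by omega) (by omega) (by omega),
    sum_count (k := 2 * p - 1) (q := 1) (by omega) (by omega) (by omega)] at h
  push_cast at h
  linear_combination h

variable {f}

theorem zeroSumCount_two_mul_eq_neg_one {J : Finset ι} (hJ : 3 * p - 3 < #J) (hJ' : #J < 3 * p)
    (h : zeroSumCount f J p = 0) : (zeroSumCount f J (2 * p) : ZMod p) = -1 := by
  have hsum := sum_range_neg_one_pow_mul_zeroSumCount f (J := J) (N := 3) (r := 0)
    (by rw [Fintype.card_fin]; omega) hJ' (Fact.out : p.Prime).pos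
  simp only [sum_range_succ, sum_range_zero, zero_mul, one_mul, add_zero, zero_add,
    zeroSumCount_zero, h] at hsum
  push_cast at hsum
  linear_combination hsum

-- If `J` were a zero-sum set of size `3p`, complements in `J` would show that no zero-sum subset
-- of `J` has size `2p`, against `zeroSumCount_two_mul_eq_neg_one`.
theorem zeroSumCount_three_mul_eq_zero {X : Finset ι} (h : zeroSumCount f X p = 0) :
    zeroSumCount f X (3 * p) = 0 := by
  classical
  have hp := (Fact.out : p.Prime).two_le
  refine zeroSumCount_eq_zero_iff.2 fun J hJX hJ hJ0 => ?_
  have count_J := zeroSumCount_eq_zero_of_subset hJX h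
  have count_two_mul_J : zeroSumCount f J (2 * p) = 0 := by
    rw [show 2 * p = #J - p by omega]
    exact zeroSumCount_card_sub_eq_zero hJ0 (by omega) count_J
  obtain ⟨a, ha⟩ : J.Nonempty := card_pos.1 (by omega)
  have card_erase : #(J.erase a) = 3 * p - 1 := by rw [card_erase_of_mem ha, hJ]
  have count_erase := zeroSumCount_two_mul_eq_neg_one (J := J.erase a) (by omega) (by omega)
    (zeroSumCount_eq_zero_of_subset (erase_subset a J) count_J)
  rw [zeroSumCount_eq_zero_of_subset (erase_subset a J) count_two_mul_J,
    Nat.cast_zero] at count_erase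
  exact neg_ne_zero.2 one_ne_zero count_erase.symm

theorem zeroSumCount_sub_one_eq_zeroSumCount_three_mul_sub_one {X : Finset ι}
    (hX : #X = 4 * p - 3) (h : zeroSumCount f X p = 0) :
    (zeroSumCount f X (p - 1) : ZMod p) = zeroSumCount f X (3 * p - 1) := by
  classical
  have hp := (Fact.out : p.Prime).two_le
  have count_two_mul {J : Finset ι} (hJX : J ⊆ X) (hJ : 3 * p - 3 < #J) (hJ' : #J < 3 * p) :
      (zeroSumCount f J (2 * p) : ZMod p) = -1 :=
    zeroSumCount_two_mul_eq_neg_one hJ hJ' (zeroSumCount_eq_zero_of_subset hJX h)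
  have count_sdiff {A : Finset ι} (hA : A ∈ {A ∈ X.powersetCard (p - 1) | ∑ i ∈ A, f i = 0}) :
      (zeroSumCount f (X \ A) (2 * p) : ZMod p) = -1 := by
    obtain ⟨hAX, hA⟩ := mem_powersetCard.1 (mem_filter.1 hA).1
    have := card_sdiff_of_subset hAX
    exact count_two_mul sdiff_subset (by omega) (by omega)
  have count_superset {D : Finset ι}
      (hD : D ∈ {D ∈ X.powersetCard (p - 1 + 2 * p) | ∑ i ∈ D, f i = 0}) :
      (zeroSumCount f D (2 * p) : ZMod p) = -1 := by
    obtain ⟨hDX, hD⟩ := mem_powersetCard.1 (mem_filter.1 hD).1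
    exact count_two_mul hDX (by omega) (by omega)
  have double_count := congrArg (Nat.cast : ℕ → ZMod p)
    (sum_zeroSumCount_sdiff f X (p - 1) (2 * p))
  rw [Nat.cast_sum, Nat.cast_sum, sum_congr rfl fun A hA => count_sdiff hA,
    sum_congr rfl fun D hD => count_superset hD, sum_const, sum_const, smul_neg, smul_neg,
    neg_inj, nsmul_one, nsmul_one] at double_count
  rwa [show p - 1 + 2 * p = 3 * p - 1 by omega] at double_count

theorem exists_zeroSum_of_odd_prime (hp : 2 < p) {X : Finset ι} (hX : #X = 4 * p - 3) :
    ∃ T ⊆ X, #T = p ∧ ∑ i ∈ T, f i = 0 := by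
  by_contra! h_none
  have hcount : zeroSumCount f X p = 0 := zeroSumCount_eq_zero_iff.2 h_none
  have relation_zero := sum_range_neg_one_pow_mul_zeroSumCount f (J := X) (N := 4) (r := 0)
    (by rw [Fintype.card_fin]; omega) (by omega) (by omega)
  have relation_neg_one := sum_range_neg_one_pow_mul_zeroSumCount f (J := X) (N := 4) (r := p - 1)
    (by rw [Fintype.card_fin]; omega) (by omega) (by omega)
  have relation_average := zeroSumCount_relation_of_card_eq_four_mul_sub f hp hX
  have relation_complement := zeroSumCount_sub_one_eq_zeroSumCount_three_mul_sub_one hX hcount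
  simp only [sum_range_succ, sum_range_zero, zero_mul, one_mul, add_zero, zero_add,
    zeroSumCount_zero, hcount, zeroSumCount_three_mul_eq_zero hcount] at relation_zero
  simp only [sum_range_succ, sum_range_zero, zero_mul, zero_add,
    show 1 * p + (p - 1) = 2 * p - 1 by omega, show 2 * p + (p - 1) = 3 * p - 1 by omega,
    zeroSumCount_eq_zero_of_card_lt f (show #X < 3 * p + (p - 1) by omega)] at relation_neg_one
  rw [hcount] at relation_average
  push_cast at relation_zero relation_neg_one relation_average
  have two_eq_zero : ((2 : ℕ) : ZMod p) = 0 := by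
    push_cast
    linear_combination relation_average - relation_zero + relation_neg_one + relation_complement
  exact (Nat.le_of_dvd two_pos ((ZMod.natCast_eq_zero_iff _ _).1 two_eq_zero)).not_gt hp

theorem exists_zeroSum_pair (f : ι → Fin 2 → ZMod 2) {X : Finset ι} (hX : 5 ≤ #X) :
    ∃ T ⊆ X, #T = 2 ∧ ∑ i ∈ T, f i = 0 := by
  classical
  obtain ⟨a, ha, b, hb, hab, hfab⟩ := exists_ne_map_eq_of_card_lt_of_maps_to (s := X)
    (t := (univ : Finset (Fin 2 → ZMod 2))) (f := f)
    (lt_of_eq_of_lt (by simp [ZMod.card]) (Nat.lt_of_succ_le hX)) (by simp)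
  refine ⟨{a, b}, by simp [insert_subset_iff, ha, hb], card_pair hab, ?_⟩
  rw [sum_pair hab, hfab]
  exact CharTwo.add_self_eq_zero _

theorem kemnitz (f : ι → Fin 2 → ZMod p) {X : Finset ι} (hX : 4 * p - 3 ≤ #X) :
    ∃ T ⊆ X, #T = p ∧ ∑ i ∈ T, f i = 0 := by
  obtain rfl | hp := (Fact.out : p.Prime).eq_two_or_odd'
  · exact exists_zeroSum_pair f hX
  obtain ⟨Y, hYX, hY⟩ := exists_subset_card_eq hX
  obtain ⟨T, hTY, hT⟩ := exists_zeroSum_of_odd_prime (f := f)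
    ((Fact.out : p.Prime).two_le.lt_of_ne' (by rintro rfl; exact absurd hp (by decide))) hY
  exact ⟨T, hTY.trans hYX, hT⟩

theorem kemnitz_multiset {S : Multiset (Fin 2 → ZMod p)} (hS : 4 * p - 3 ≤ Multiset.card S) :
    ∃ T ≤ S, Multiset.card T = p ∧ T.sum = 0 := by
  obtain ⟨T, hTS, hT⟩ := kemnitz Prod.fst (X := S.toEnumFinset) (by simpa using hS)
  exact ⟨T.1.map Prod.fst, Multiset.map_fst_le_of_subset_toEnumFinset hTS, by simpa using hT⟩

end Kemnitz

section MultisetMap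

variable {α β : Type*}

theorem exists_multiset_map_eq_of_forall_mem_range {f : α → β} {S : Multiset β}
    (hS : ∀ b ∈ S, b ∈ Set.range f) : ∃ P : Multiset α, P.map f = S :=
  have : CanLift β α f (· ∈ Set.range f) := ⟨fun _ h => h⟩
  CanLift.prf S hS

theorem exists_list_map_eq_of_coe_le_map (f : α → β) {l : List β} {Q : Multiset α}
    (h : (l : Multiset β) ≤ Q.map f) :
    ∃ l' : List α, (l' : Multiset α) ≤ Q ∧ l'.map f = l := by
  induction l generalizing Q with
  | nil => exact ⟨[], by simp⟩
  | cons b l ih =>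
    obtain ⟨a, ha, rfl⟩ := Multiset.mem_map.1 (Multiset.mem_of_le h List.mem_cons_self)
    obtain ⟨R, rfl⟩ := Multiset.exists_cons_of_mem ha
    rw [Multiset.map_cons, ← Multiset.cons_coe, Multiset.cons_le_cons_iff] at h
    obtain ⟨l', hl'R, rfl⟩ := ih h
    exact ⟨a :: l', Multiset.cons_le_cons a hl'R, rfl⟩

end MultisetMap

section ForcesSubproduct

variable {M : Type*} [Monoid M] {A B C : Set M} {k l n N : ℕ}

/-- Every sequence of length at least `N` over `A` has a subsequence of length `k` whose terms,
multiplied in a suitable order, have their product in `B`. For `A = Set.univ`, `B = {1}` and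
`k = e(G)` this says `s(G) ≤ N`. -/
def ForcesSubproduct (A B : Set M) (k N : ℕ) : Prop :=
  ∀ S : Multiset M, (∀ g ∈ S, g ∈ A) → N ≤ Multiset.card S →
    ∃ l : List M, (l : Multiset M) ≤ S ∧ l.length = k ∧ l.prod ∈ B

theorem ForcesSubproduct.exists_disjoint_blocks (h : ForcesSubproduct A B k N) {S : Multiset M}
    (hS : ∀ g ∈ S, g ∈ A) (hcard : n * k + N ≤ Multiset.card S) :
    ∃ Q : Multiset (List M), Multiset.card Q = n + 1 ∧
      (∀ l ∈ Q, l.length = k ∧ l.prod ∈ B) ∧ (Q.map Multiset.ofList).join ≤ S := by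
  induction n generalizing S with
  | zero =>
    obtain ⟨l, hlS, hl⟩ := h S hS (by omega)
    exact ⟨{l}, by simp, by simpa using hl, by simpa using hlS⟩
  | succ n ih =>
    rw [add_one_mul] at hcard
    obtain ⟨l, hlS, hl⟩ := h S hS (by omega)
    obtain ⟨R, rfl⟩ := Multiset.le_iff_exists_add.1 hlS
    rw [Multiset.card_add, Multiset.coe_card, hl.1] at hcard
    obtain ⟨Q, hQcard, hQ, hQR⟩ := ih (fun g hg => hS g (Multiset.mem_add.2 (.inr hg))) (by omega)
    refine ⟨l ::ₘ Q, by rw [Multiset.card_cons, hQcard], Multiset.forall_mem_cons.2 ⟨hl, hQ⟩, ?_⟩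
    rw [Multiset.map_cons, Multiset.join_cons]
    exact add_le_add_right hQR _

theorem ForcesSubproduct.comp (hAB : ForcesSubproduct A B k N)
    (hBC : ForcesSubproduct B C l (n + 1)) : ForcesSubproduct A C (k * l) (n * k + N) := by
  intro S hS hcard
  obtain ⟨Q, hQcard, hQ, hQS⟩ := hAB.exists_disjoint_blocks hS hcard
  obtain ⟨L, hLQ, hLl, hLC⟩ := hBC (Q.map List.prod)
    (Multiset.forall_mem_map_iff.2 fun l hl => (hQ l hl).2) (by rw [Multiset.card_map, hQcard])
  obtain ⟨L, hLQ', rfl⟩ := exists_list_map_eq_of_coe_le_map List.prod hLQ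
  have length_block (b : List M) (hb : b ∈ L) : b.length = k :=
    (hQ b (Multiset.mem_of_le hLQ' (Multiset.mem_coe.2 hb))).1
  refine ⟨L.flatten, le_trans ?_ hQS, ?_, by rwa [List.prod_flatten]⟩
  · obtain ⟨R, rfl⟩ := Multiset.le_iff_exists_add.1 hLQ'
    rw [Multiset.map_add, Multiset.join_add, Multiset.map_coe, Multiset.coe_join]
    exact Multiset.le_add_right _ _
  · rw [List.length_flatten, List.map_congr_left length_block, List.map_const', List.sum_replicate,
      ← hLl, List.length_map, smul_eq_mul, mul_comm]

end ForcesSubproduct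

section PowProducts

variable {M : Type*} [Monoid M] {x y : M} {d e m n p u : ℕ}

/-- The set of the products `x ^ i * y ^ j`. When `y` conjugates `x` to a power of `x`, it is the
metacyclic submonoid generated by `x` and `y`. -/
def powProducts (x y : M) : Set M :=
  Set.range fun z : ℕ × ℕ => x ^ z.1 * y ^ z.2

theorem semiconjBy_pow_pow (h : SemiconjBy y x (x ^ u)) (i j : ℕ) :
    SemiconjBy (y ^ j) (x ^ i) (x ^ (u ^ j * i)) := by
  induction j with
  | zero => simp
  | succ j ih =>
    have h_succ := h.pow_right (u ^ j * i)
    rw [← pow_mul, ← mul_assoc, ← pow_succ'] at h_succ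
    rw [pow_succ' y]
    exact h_succ.mul_left ih

-- Modulo a divisor `d` of `u - 1`, the exponent of `x` in a product does not see the conjugations.
theorem exists_prod_map_pow_mul_pow_eq (h : SemiconjBy y x (x ^ u)) (hu : u ≡ 1 [MOD d])
    (l : List (ℕ × ℕ)) :
    ∃ a, (l.map fun z => x ^ z.1 * y ^ z.2).prod = x ^ a * y ^ (l.map Prod.snd).sum ∧
      a ≡ (l.map Prod.fst).sum [MOD d] := by
  induction l with
  | nil => exact ⟨0, by simp, rfl⟩
  | cons z l ih =>
    obtain ⟨a, hprod, ha⟩ := ih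
    refine ⟨z.1 + u ^ z.2 * a, ?_, ?_⟩
    · calc (List.map _ (z :: l)).prod
          = x ^ z.1 * (y ^ z.2 * x ^ a) * y ^ (l.map Prod.snd).sum := by
            rw [List.map_cons, List.prod_cons, hprod]; simp only [mul_assoc]
        _ = x ^ z.1 * (x ^ (u ^ z.2 * a) * y ^ z.2) * y ^ (l.map Prod.snd).sum := by
            rw [(semiconjBy_pow_pow h a z.2).eq]
        _ = _ := by
            simp only [List.map_cons, List.sum_cons, pow_add, mul_assoc]
    · simpa using ((hu.pow z.2).mul ha).add_left z.1

theorem prod_mem_powProducts_pow (h : SemiconjBy y x (x ^ u)) (hu : u ≡ 1 [MOD d])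
    {l : List (ℕ × ℕ)} (hfst : d ∣ (l.map Prod.fst).sum) (hsnd : e ∣ (l.map Prod.snd).sum) :
    (l.map fun z => x ^ z.1 * y ^ z.2).prod ∈ powProducts (x ^ d) (y ^ e) := by
  obtain ⟨a, hprod, ha⟩ := exists_prod_map_pow_mul_pow_eq h hu l
  obtain ⟨b, rfl⟩ := (ha.dvd_iff dvd_rfl).2 hfst
  obtain ⟨c, hc⟩ := hsnd
  exact ⟨(b, c), by rw [hprod, hc, pow_mul, pow_mul]⟩

theorem forcesSubproduct_powProducts_prime [Fact p.Prime] (h : SemiconjBy y x (x ^ u))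
    (hu : u ≡ 1 [MOD p]) :
    ForcesSubproduct (powProducts x y) (powProducts (x ^ p) (y ^ p)) p (4 * p - 3) := by
  intro S hS hcard
  obtain ⟨P, rfl⟩ := exists_multiset_map_eq_of_forall_mem_range hS
  let f : ℕ × ℕ → Fin 2 → ZMod p := fun z => ![z.1, z.2]
  rw [Multiset.card_map] at hcard
  obtain ⟨T, hTP, hTcard, hTsum⟩ :=
    kemnitz_multiset (S := P.map f) (by rwa [Multiset.card_map])
  induction T using Quotient.inductionOn with | _ T
  obtain ⟨l, hlP, rfl⟩ := exists_list_map_eq_of_coe_le_map f hTP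
  have sum_eq_zero (i : Fin 2) : (l.map fun z => f z i).sum = 0 := by
    simpa [Pi.list_sum_apply, Function.comp_def] using congrFun hTsum i
  refine ⟨l.map fun z => x ^ z.1 * y ^ z.2, ?_, by simpa using hTcard,
    prod_mem_powProducts_pow h hu ?_ ?_⟩
  · exact Multiset.map_le_map hlP
  · rw [← ZMod.natCast_eq_zero_iff, Nat.cast_list_sum, List.map_map]
    exact sum_eq_zero 0
  · rw [← ZMod.natCast_eq_zero_iff, Nat.cast_list_sum, List.map_map]
    exact sum_eq_zero 1

theorem forcesSubproduct_powProducts_one_right (hx : x ^ n = 1) :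
    ForcesSubproduct (powProducts x 1) {1} n (2 * n - 1) := by
  intro S hS hcard
  obtain ⟨P, rfl⟩ := exists_multiset_map_eq_of_forall_mem_range hS
  rw [Multiset.card_map] at hcard
  obtain ⟨T, hTP, hTcard, hTsum⟩ := ZMod.erdos_ginzburg_ziv_multiset
    (P.map fun z => (z.1 : ZMod n)) (by rwa [Multiset.card_map])
  induction T using Quotient.inductionOn with | _ T
  obtain ⟨l, hlP, rfl⟩ := exists_list_map_eq_of_coe_le_map _ hTP
  refine ⟨l.map fun z => x ^ z.1 * 1 ^ z.2, ?_, by simpa using hTcard, ?_⟩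
  · exact Multiset.map_le_map hlP
  · have hfst : n ∣ (l.map Prod.fst).sum := by
      rw [← ZMod.natCast_eq_zero_iff, Nat.cast_list_sum, List.map_map]
      exact hTsum
    obtain ⟨z, hz⟩ :=
      prod_mem_powProducts_pow (x := x) (u := 1) (y := 1) (by simp) rfl hfst (one_dvd _)
    simpa [hx] using hz.symm

theorem modEq_one_minFac (hm : m ≠ 1) (hm0 : m ≠ 0) (h : u ^ m ≡ 1 [MOD m]) :
    u ≡ 1 [MOD m.minFac] := by
  have hp := Nat.minFac_prime hm
  have := Fact.mk hp
  have pow_eq_one : (u : ZMod m.minFac) ^ m = 1 := by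
    exact_mod_cast (ZMod.natCast_eq_natCast_iff _ _ _).2 (h.of_dvd (Nat.minFac_dvd m))
  have pow_sub_one_eq_one : (u : ZMod m.minFac) ^ (m.minFac - 1) = 1 :=
    ZMod.pow_card_sub_one_eq_one fun h0 => by simp [h0, hm0] at pow_eq_one
  have coprime : m.Coprime (m.minFac - 1) :=
    Nat.coprime_of_lt_minFac (Nat.sub_ne_zero_of_lt hp.one_lt) (Nat.sub_lt hp.pos one_pos)
  have : (u : ZMod m.minFac) = 1 := by
    simpa [coprime.gcd_eq_one] using pow_gcd_eq_one.2 ⟨pow_eq_one, pow_sub_one_eq_one⟩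
  rw [← ZMod.natCast_eq_natCast_iff, this, Nat.cast_one]

theorem forcesSubproduct_powProducts_singleton_one (hm : 0 < m) (hn : 0 < n)
    (h : SemiconjBy y x (x ^ u)) (hu : u ^ m ≡ 1 [MOD m]) (hx : x ^ (m * n) = 1) (hy : y ^ m = 1) :
    ForcesSubproduct (powProducts x y) {1} (m * n) (2 * m + 2 * (m * n) - 3) := by
  induction m using Nat.strong_induction_on generalizing x y u with
  | _ m ih =>
    obtain rfl | hm1 := eq_or_ne m 1
    · rw [pow_one] at hy
      subst hy
      convert forcesSubproduct_powProducts_one_right hx using 1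
      omega
    have hp := Nat.minFac_prime hm1
    have := Fact.mk hp
    have hup := modEq_one_minFac hm1 hm.ne' hu
    obtain ⟨m', hm'⟩ := Nat.minFac_dvd m
    generalize m.minFac = p at *
    subst hm'
    have hm'0 : 0 < m' := Nat.pos_of_mul_pos_left hm
    have forces_pow : ForcesSubproduct (powProducts (x ^ p) (y ^ p)) {1} (m' * n)
        (2 * m' + 2 * (m' * n) - 3) := by
      refine ih m' (lt_mul_of_one_lt_left hm'0 hp.one_lt) hm'0 (u := u ^ p) ?_ ?_ ?_ ?_
      · rw [← pow_mul, mul_comm p]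
        exact semiconjBy_pow_pow h p p
      · rw [← pow_mul]
        exact hu.of_dvd (Dvd.intro_left p rfl)
      · rwa [← pow_mul, ← mul_assoc]
      · rwa [← pow_mul]
    have hmn : 1 ≤ m' * n := Nat.mul_pos hm'0 hn
    obtain ⟨k, hk⟩ : ∃ k, 2 * m' + 2 * (m' * n) = k + 4 := ⟨2 * m' + 2 * (m' * n) - 4, by omega⟩
    rw [show 2 * m' + 2 * (m' * n) - 3 = k + 1 by omega] at forces_pow
    have card_eq : 2 * (p * m') + 2 * (p * m' * n) - 3 = k * p + (4 * p - 3) := by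
      have : 2 * (p * m') + 2 * (p * m' * n) = k * p + 4 * p := by linear_combination p * hk
      have := hp.pos
      omega
    rw [card_eq, mul_assoc]
    exact (forcesSubproduct_powProducts_prime h hup).comp forces_pow

end PowProducts

section IsProductOne

variable {G : Type*} [Group G]

theorem IsProductOne.of_one_cons {S : Multiset G} (h : IsProductOne (1 ::ₘ S)) :
    IsProductOne S := by
  obtain ⟨l, hlS, hl⟩ := h
  obtain ⟨l₁, l₂, rfl⟩ := List.append_of_mem
    (show (1 : G) ∈ l from Multiset.mem_coe.1 (hlS ▸ Multiset.mem_cons_self 1 S))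
  refine ⟨l₁ ++ l₂, ?_, by simpa using hl⟩
  rwa [← Multiset.coe_eq_coe.2 List.perm_middle.symm, ← Multiset.cons_coe,
    Multiset.cons_inj_right] at hlS

theorem IsProductOne.of_replicate_one_add {S : Multiset G} {i : ℕ}
    (h : IsProductOne (Multiset.replicate i 1 + S)) : IsProductOne S := by
  induction i with
  | zero => simpa using h
  | succ i ih =>
    rw [Multiset.replicate_succ, Multiset.cons_add] at h
    exact ih h.of_one_cons

theorem exists_isProductOne_card_le {k N : ℕ} (hk : 0 < k)
    (h : ∀ S : Multiset G, N + (k - 1) ≤ Multiset.card S →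
      ∃ T ≤ S, Multiset.card T = k ∧ IsProductOne T)
    {S : Multiset G} (hS : N ≤ Multiset.card S) :
    ∃ T ≤ S, T ≠ 0 ∧ Multiset.card T ≤ k ∧ IsProductOne T := by
  classical
  obtain ⟨T, hT, hTk, hT1⟩ := h (S + Multiset.replicate (k - 1) 1) (by simpa using hS)
  obtain ⟨i, hi, hTi⟩ := Multiset.le_replicate_iff.1 (tsub_le_iff_left.2 hT)
  have hTS : Multiset.replicate i 1 + T ∩ S = T := by rw [← hTi, Multiset.sub_add_inter]
  have card_eq : i + Multiset.card (T ∩ S) = k := by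
    rw [← hTk, ← hTS, Multiset.card_add, Multiset.card_replicate, hTS]
  refine ⟨T ∩ S, Multiset.inter_le_right, ?_, by omega, ?_⟩
  · exact Multiset.card_pos.1 (by omega)
  · exact IsProductOne.of_replicate_one_add (hTS.symm ▸ hT1)

end IsProductOne

section SemidirectProduct

open SemidirectProduct

theorem pow_modEq_one_of_semiconjBy {G : Type*} [Group G] {x y : G} {m u : ℕ}
    (h : SemiconjBy y x (x ^ u)) (hy : y ^ m = 1) : u ^ m ≡ 1 [MOD orderOf x] := by
  have hx := semiconjBy_pow_pow h 1 m
  rw [hy, mul_one, pow_one, SemiconjBy, one_mul, mul_one] at hx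
  rw [← pow_eq_pow_iff_modEq, pow_one, ← hx]

theorem exists_pow_ofAdd_one_eq {k : ℕ} [NeZero k] (a : Multiplicative (ZMod k)) :
    ∃ i : ℕ, Multiplicative.ofAdd (1 : ZMod k) ^ i = a :=
  ⟨a.toAdd.val, by rw [← ofAdd_nsmul, nsmul_one, ZMod.natCast_zmod_val, ofAdd_toAdd]⟩

theorem orderOf_ofAdd_one (k : ℕ) : orderOf (Multiplicative.ofAdd (1 : ZMod k)) = k := by
  rw [orderOf_ofAdd_eq_addOrderOf, ZMod.addOrderOf_one]

variable {N H : Type*} [Group N] [Group H] {φ : H →* MulAut N} {a : N} {b : H}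

theorem powProducts_inl_inr_eq_univ (ha : ∀ g, ∃ i : ℕ, a ^ i = g)
    (hb : ∀ g, ∃ i : ℕ, b ^ i = g) :
    powProducts (inl a : N ⋊[φ] H) (inr b) = Set.univ := by
  refine Set.eq_univ_of_forall fun g => ?_
  obtain ⟨i, hi⟩ := ha g.left
  obtain ⟨j, hj⟩ := hb g.right
  exact ⟨(i, j), by simp only [← map_pow, hi, hj, inl_left_mul_inr_right]⟩

theorem exists_semiconjBy_inr_inl (ha : ∀ g, ∃ i : ℕ, a ^ i = g) (φ : H →* MulAut N) (b : H) :
    ∃ u : ℕ, SemiconjBy (inr b : N ⋊[φ] H) (inl a) (inl a ^ u) := by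
  obtain ⟨u, hu⟩ := ha (φ b a)
  refine ⟨u, ?_⟩
  rw [← map_pow, hu, inl_aut, map_inv]
  exact SemiconjBy.conj_mk _ _

theorem exists_metacyclic_generators {k m : ℕ} (hk : k ≠ 0) (hm : m ≠ 0)
    (φ : Multiplicative (ZMod m) →* MulAut (Multiplicative (ZMod k))) :
    ∃ (x y : Multiplicative (ZMod k) ⋊[φ] Multiplicative (ZMod m)) (u : ℕ),
      SemiconjBy y x (x ^ u) ∧ u ^ m ≡ 1 [MOD k] ∧ x ^ k = 1 ∧ y ^ m = 1 ∧
        powProducts x y = Set.univ := by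
  have : NeZero k := ⟨hk⟩
  have : NeZero m := ⟨hm⟩
  let x : Multiplicative (ZMod k) ⋊[φ] Multiplicative (ZMod m) := inl (.ofAdd 1)
  let y : Multiplicative (ZMod k) ⋊[φ] Multiplicative (ZMod m) := inr (.ofAdd 1)
  have orderOf_x : orderOf x = k :=
    (orderOf_injective inl inl_injective _).trans (orderOf_ofAdd_one k)
  have orderOf_y : orderOf y = m :=
    (orderOf_injective inr inr_injective _).trans (orderOf_ofAdd_one m)
  have hx : x ^ k = 1 := orderOf_dvd_iff_pow_eq_one.1 orderOf_x.dvd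
  have hy : y ^ m = 1 := orderOf_dvd_iff_pow_eq_one.1 orderOf_y.dvd
  obtain ⟨u, hu⟩ := exists_semiconjBy_inr_inl exists_pow_ofAdd_one_eq φ (.ofAdd 1)
  exact ⟨x, y, u, hu, orderOf_x ▸ pow_modEq_one_of_semiconjBy hu hy, hx, hy,
    powProducts_inl_inr_eq_univ exists_pow_ofAdd_one_eq exists_pow_ofAdd_one_eq⟩

end SemidirectProduct

theorem eta_and_s_bounds_general {G : Type*} [Group G] {x y : G} {m n u : ℕ} (hm : 0 < m)
    (hn : 0 < n) (hxy : SemiconjBy y x (x ^ u)) (hu : u ^ m ≡ 1 [MOD m])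
    (hx : x ^ (m * n) = 1) (hy : y ^ m = 1) (hG : powProducts x y = Set.univ) :
    (∀ S : Multiset G, 2 * m + m * n - 2 ≤ Multiset.card S →
      ∃ T ≤ S, T ≠ 0 ∧ Multiset.card T ≤ m * n ∧ IsProductOne T) ∧
    (∀ S : Multiset G, 2 * m + 2 * (m * n) - 3 ≤ Multiset.card S →
      ∃ T ≤ S, Multiset.card T = m * n ∧ IsProductOne T) := by
  have s_bound (S : Multiset G) (hS : 2 * m + 2 * (m * n) - 3 ≤ Multiset.card S) :
      ∃ T ≤ S, Multiset.card T = m * n ∧ IsProductOne T := by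
    obtain ⟨l, hlS, hlcard, hl⟩ := forcesSubproduct_powProducts_singleton_one hm hn hxy hu hx hy S
      (fun g _ => hG ▸ Set.mem_univ g) hS
    exact ⟨l, hlS, hlcard, l, rfl, hl⟩
  have hmn : 0 < m * n := Nat.mul_pos hm hn
  exact ⟨fun S => exists_isProductOne_card_le hmn fun S' hS' => s_bound S' (by omega), s_bound⟩

/-- For `G ≅ C_m ⋉_φ C_{mn}` with `e(G) = mn` (the maximal order of an element),
`η(G) ≤ 2m + mn − 2` and `s(G) ≤ 2m + 2mn − 3`. -/
theorem eta_and_s_bounds (m n : ℕ) (hm : 0 < m) (hn : 0 < n)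
    (φ : Multiplicative (ZMod m) →* MulAut (Multiplicative (ZMod (m * n))))
    (hexp : (∀ g : Multiplicative (ZMod (m * n)) ⋊[φ] Multiplicative (ZMod m),
        orderOf g ≤ m * n) ∧
      ∃ g : Multiplicative (ZMod (m * n)) ⋊[φ] Multiplicative (ZMod m),
        orderOf g = m * n) :
    (∀ S : Multiset (Multiplicative (ZMod (m * n)) ⋊[φ] Multiplicative (ZMod m)),
      2 * m + m * n - 2 ≤ Multiset.card S →
      ∃ T ≤ S, T ≠ 0 ∧ Multiset.card T ≤ m * n ∧ IsProductOne T) ∧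
    (∀ S : Multiset (Multiplicative (ZMod (m * n)) ⋊[φ] Multiplicative (ZMod m)),
      2 * m + 2 * (m * n) - 3 ≤ Multiset.card S →
      ∃ T ≤ S, Multiset.card T = m * n ∧ IsProductOne T) := by
  obtain ⟨x, y, u, hxy, hu, hx, hy, hG⟩ :=
    exists_metacyclic_generators (Nat.mul_pos hm hn).ne' hm.ne' φ
  exact eta_and_s_bounds_general hm hn hxy (hu.of_dvd (Nat.dvd_mul_right m n)) hx hy hG
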